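/- For every integer r ≥ 1 and every integer n ≥ 1, the number of Motzkin paths of length n with no plateaus of length r satisfies c_r(n,0) = c_r(n-1,0) + Σ_{k=0}^{n-2} c_r(k,0)·c_r(n-k-2,0) - c_r(n-r-2,0), where c_r(m,0) = 0 for m < 0. -/

import Mathlib

/-- Steps of a Motzkin path: up, horizontal, down. -/
inductive Step : Type
  | U | H | D
  deriving DecidableEq

/-- A list of steps is a Motzkin path if every prefix has at least as many
up steps as down steps, and the total numbers of up and down steps agree. -/
def IsMotzkin (l : List Step) : Prop :=
  (∀ k : ℕ, (l.take k).count Step.D ≤ (l.take k).count Step.U) ∧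
    l.count Step.U = l.count Step.D

/-- The number of plateaus of length `r` (occurrences of a U step, then `r`
consecutive H steps, then a D step) in a path. -/
def plateauCountR (r : ℕ) (l : List Step) : ℕ :=
  ((Finset.range l.length).filter
    (fun i => (l.drop i).take (r + 2)
      = Step.U :: (List.replicate r Step.H ++ [Step.D]))).card

/-- `cR r n p` is the number of Motzkin paths of length `n` with exactly `p`
plateaus of length `r`; it is `0` when `n < 0` or `p < 0`. -/
noncomputable def cR (r : ℕ) (n p : ℤ) : ℕ :=
  if 0 ≤ n ∧ 0 ≤ p then
    Nat.card {l : List Step // l.length = n.toNat ∧ IsMotzkin l ∧ plateauCountR r l = p.toNat}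
  else 0

/-!
A plateau of length `r` is a factor `U w D` with `w = Hʳ`, and only the fact that `w` is itself a
Motzkin path matters. Every proper nonempty prefix of `U w D` ends strictly above its starting
height, while no suffix of a Motzkin path ends above its starting height; hence an occurrence of
`U w D` in a concatenation of Motzkin paths lies inside one of the two. In the first-return
decomposition `H l` or `U a D b` of a path, `U w D` therefore occurs only inside `l`, `a` or `b`,
or as the arch `U a D` itself, when `a = w`; the pairs `(w, b)` are the ones to subtract.
-/

namespace IsMotzkin

variable {a b c w : List Step}

theorem count_D_le_count_U_of_prefix (ha : IsMotzkin a) (hc : c <+: a) :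
    c.count Step.D ≤ c.count Step.U := by
  rw [List.prefix_iff_eq_take.mp hc]
  exact ha.1 _

theorem count_U_le_count_D_of_suffix (ha : IsMotzkin a) (hc : c <:+ a) :
    c.count Step.U ≤ c.count Step.D := by
  obtain ⟨s, rfl⟩ := hc
  have hs := ha.count_D_le_count_U_of_prefix (List.prefix_append s c)
  have hbalance := ha.2
  simp only [List.count_append] at hbalance
  omega

theorem append_iff (ha : IsMotzkin a) : IsMotzkin (a ++ b) ↔ IsMotzkin b := by
  have hbalance := ha.2
  constructor
  · rintro ⟨hprefix, htotal⟩
    refine ⟨fun k => ?_, ?_⟩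
    · have hk := hprefix (a.length + k)
      simp only [List.take_length_add_append, List.count_append] at hk
      omega
    · simp only [List.count_append] at htotal
      omega
  · intro hb
    refine ⟨fun k => ?_, ?_⟩
    · simp only [List.take_append, List.count_append]
      exact add_le_add (ha.1 k) (hb.1 _)
    · simp only [List.count_append, hbalance, hb.2]

end IsMotzkin

theorem isMotzkin_nil : IsMotzkin [] := by simp [IsMotzkin]

theorem isMotzkin_singleton_H : IsMotzkin [Step.H] :=
  ⟨fun k => by cases k <;> simp, by simp⟩

theorem isMotzkin_cons_H_iff {l : List Step} : IsMotzkin (Step.H :: l) ↔ IsMotzkin l :=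
  isMotzkin_singleton_H.append_iff

theorem isMotzkin_replicate_H (r : ℕ) : IsMotzkin (List.replicate r Step.H) := by
  induction r with
  | zero => exact isMotzkin_nil
  | succ r ih => exact isMotzkin_cons_H_iff.mpr ih

theorem not_isMotzkin_cons_D (l : List Step) : ¬ IsMotzkin (Step.D :: l) :=
  fun h => by simpa using h.1 1

/-- The arch over `w`: the path `U w D` obtained by raising `w` one level. The plateau of length
`r` is the arch over `Hʳ`. -/
def arch (w : List Step) : List Step :=
  Step.U :: (w ++ [Step.D])

theorem arch_append (a b : List Step) : arch a ++ b = Step.U :: (a ++ Step.D :: b) := by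
  simp [arch]

theorem length_arch (w : List Step) : (arch w).length = w.length + 2 := by
  simp [arch]

namespace IsMotzkin

variable {a a' b b' c w : List Step}

protected theorem arch (hw : IsMotzkin w) : IsMotzkin (arch w) := by
  refine ⟨fun k => ?_, by simp [_root_.arch, hw.2]⟩
  cases k with
  | zero => simp
  | succ k =>
    have hfinal : ([Step.D].take (k - w.length)).count Step.D ≤ 1 :=
      (List.take_prefix _ _).count_le _
    have hk := hw.1 k
    simp only [_root_.arch, List.take_succ_cons, List.take_append, List.count_cons_self,
      List.count_append, List.count_cons_of_ne, ne_eq, reduceCtorEq, not_false_eq_true]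
    omega

theorem count_D_lt_count_U_of_prefix_arch (hw : IsMotzkin w) (hc : c <+: arch w) (hnil : c ≠ [])
    (hne : c ≠ arch w) : c.count Step.D < c.count Step.U := by
  obtain rfl | ⟨c, rfl, hcw⟩ := List.prefix_cons_iff.mp hc
  · exact absurd rfl hnil
  obtain rfl | hcw := List.prefix_concat_iff.mp hcw
  · exact absurd rfl hne
  simpa [Nat.lt_succ_iff] using hw.count_D_le_count_U_of_prefix hcw

theorem eq_of_arch_prefix_arch (ha : IsMotzkin a) (hw : IsMotzkin w) (h : arch a <+: arch w) :
    a = w := by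
  by_contra hne
  have hlt := hw.count_D_lt_count_U_of_prefix_arch h (by simp [arch])
    (by simpa [arch] using hne)
  exact hlt.ne' ha.arch.2

theorem arch_append_inj (ha : IsMotzkin a) (ha' : IsMotzkin a')
    (h : arch a ++ b = arch a' ++ b') : a = a' ∧ b = b' := by
  have haa' : a = a' := by
    have hprefix : arch a <+: arch a' ++ b' := ⟨b, h⟩
    rcases List.prefix_or_prefix_of_prefix hprefix (List.prefix_append _ _) with hp | hp
    · exact ha.eq_of_arch_prefix_arch ha' hp
    · exact (ha'.eq_of_arch_prefix_arch ha hp).symm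
  subst haa'
  exact ⟨rfl, List.append_cancel_left h⟩

theorem arch_infix_append_iff (hw : IsMotzkin w) (ha : IsMotzkin a) :
    arch w <:+: a ++ b ↔ arch w <:+: a ∨ arch w <:+: b := by
  rw [List.infix_append_iff_ne_nil, ← or_assoc, or_iff_left]
  rintro ⟨c, d, hc, hd, hcd, hca, -⟩
  have hlt := hw.count_D_lt_count_U_of_prefix_arch ⟨d, hcd.symm⟩ hc (by simpa [hcd] using hd)
  exact hlt.not_ge (ha.count_U_le_count_D_of_suffix hca)

theorem arch_infix_arch_iff (hw : IsMotzkin w) (ha : IsMotzkin a) :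
    arch w <:+: arch a ↔ a = w ∨ arch w <:+: a := by
  constructor
  · intro h
    rcases List.infix_cons_iff.mp h with h | h
    · exact .inl (hw.eq_of_arch_prefix_arch ha h).symm
    rcases List.infix_concat_iff.mp h with h | h
    · have hsuffix : Step.U :: w <:+ a := List.suffix_append_self_iff.mp h
      exact absurd (ha.count_U_le_count_D_of_suffix hsuffix) (by simp [hw.2])
    · exact .inr h
  · rintro (rfl | h)
    · exact List.infix_rfl
    · exact List.infix_cons (List.infix_append_of_infix_left h)

theorem arch_infix_cons_H_iff (hw : IsMotzkin w) :
    arch w <:+: Step.H :: b ↔ arch w <:+: b := by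
  rw [← List.singleton_append, hw.arch_infix_append_iff isMotzkin_singleton_H, or_iff_right]
  intro h
  simpa [length_arch] using h.length_le

theorem arch_infix_arch_append_iff (hw : IsMotzkin w) (ha : IsMotzkin a) :
    arch w <:+: arch a ++ b ↔ a = w ∨ arch w <:+: a ∨ arch w <:+: b := by
  rw [hw.arch_infix_append_iff ha.arch, hw.arch_infix_arch_iff ha, or_assoc]

end IsMotzkin

theorem not_arch_infix_self (w : List Step) : ¬ arch w <:+: w :=
  fun h => by simpa [length_arch] using h.length_le

theorem exists_isMotzkin_append_D : ∀ {l : List Step}, l.count Step.U < l.count Step.D →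
    ∃ a b, IsMotzkin a ∧ l = a ++ Step.D :: b
  | [], h => by simp at h
  | Step.D :: l, _ => ⟨[], l, isMotzkin_nil, rfl⟩
  | Step.H :: l, h => by
    obtain ⟨a, b, ha, rfl⟩ := exists_isMotzkin_append_D (l := l) (by simpa using h)
    exact ⟨Step.H :: a, b, isMotzkin_cons_H_iff.mpr ha, rfl⟩
  | Step.U :: l, h => by
    have hl : l.count Step.U + 1 < l.count Step.D := by simpa using h
    obtain ⟨a, l', ha, rfl⟩ := exists_isMotzkin_append_D (l := l) (by omega)
    have hl' : l'.count Step.U < l'.count Step.D := by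
      simp only [List.count_append, ha.2, List.count_cons_self, List.count_cons_of_ne, ne_eq,
        reduceCtorEq, not_false_eq_true] at hl
      omega
    obtain ⟨b, c, hb, rfl⟩ := exists_isMotzkin_append_D hl'
    exact ⟨arch a ++ b, c, ha.arch.append_iff.mpr hb, by simp [arch]⟩
  termination_by l => l.length

theorem IsMotzkin.exists_eq_arch_append {l : List Step} (h : IsMotzkin (Step.U :: l)) :
    ∃ a b, IsMotzkin a ∧ Step.U :: l = arch a ++ b := by
  have hcount : l.count Step.U + 1 = l.count Step.D := by simpa using h.2
  obtain ⟨a, b, ha, rfl⟩ := exists_isMotzkin_append_D (l := l) (by omega)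
  exact ⟨a, b, ha, (arch_append a b).symm⟩

instance : Fintype Step := ⟨{Step.U, Step.H, Step.D}, by rintro (_ | _ | _) <;> simp⟩

/-- The Motzkin paths of length `n` in which the arch over `w` does not occur as a factor. The
length is an integer, so that the set is empty for negative `n`. -/
noncomputable def archFree (w : List Step) (n : ℤ) : Finset (List Step) :=
  ((List.finite_length_eq Step n.toNat).subset
    (t := {l | (l.length : ℤ) = n ∧ IsMotzkin l ∧ ¬ arch w <:+: l})
    fun _ h => by simp [← h.1]).toFinset

/-- The pairs `(a, b)` of Motzkin paths of total length `n` that both avoid the arch over `w`: the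
candidates for the first-return decomposition `U a D b` of a path of length `n + 2`. -/
noncomputable def archFreePairs (w : List Step) (n : ℤ) : Finset (List Step × List Step) :=
  (Finset.Icc 0 n).biUnion fun k => archFree w k ×ˢ archFree w (n - k)

section Counting

variable {w a b l : List Step} {n : ℤ}

theorem mem_archFree :
    l ∈ archFree w n ↔ (l.length : ℤ) = n ∧ IsMotzkin l ∧ ¬ arch w <:+: l := by
  simp [archFree]

theorem mem_archFreePairs :
    (a, b) ∈ archFreePairs w n ↔ a ∈ archFree w a.length ∧ b ∈ archFree w (n - a.length) := by
  simp only [archFreePairs, Finset.mem_biUnion, Finset.mem_Icc, Finset.mem_product]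
  constructor
  · rintro ⟨k, -, ha, hb⟩
    obtain rfl := (mem_archFree.mp ha).1
    exact ⟨ha, hb⟩
  · rintro ⟨ha, hb⟩
    have hlength := (mem_archFree.mp hb).1
    exact ⟨a.length, by omega, ha, hb⟩

theorem isMotzkin_fst_of_mem_archFreePairs (h : (a, b) ∈ archFreePairs w n) : IsMotzkin a :=
  (mem_archFree.mp (mem_archFreePairs.mp h).1).2.1

theorem card_archFreePairs (w : List Step) (n : ℤ) :
    (archFreePairs w n).card =
      ∑ k ∈ Finset.Icc 0 n, (archFree w k).card * (archFree w (n - k)).card := by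
  rw [archFreePairs, Finset.card_biUnion]
  · simp only [Finset.card_product]
  · intro j _ k _ hjk
    refine Finset.disjoint_product.mpr (.inl (Finset.disjoint_left.mpr fun a hj hk => hjk ?_))
    exact (mem_archFree.mp hj).1.symm.trans (mem_archFree.mp hk).1

theorem singleton_product_archFree_subset (hw : IsMotzkin w) :
    {w} ×ˢ archFree w (n - w.length) ⊆ archFreePairs w n := by
  rintro ⟨a, b⟩ h
  obtain ⟨ha, hb⟩ := Finset.mem_product.mp h
  obtain rfl : a = w := Finset.mem_singleton.mp ha
  exact mem_archFreePairs.mpr ⟨mem_archFree.mpr ⟨rfl, hw, not_arch_infix_self a⟩, hb⟩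

theorem cons_H_mem_archFree_iff (hw : IsMotzkin w) :
    Step.H :: l ∈ archFree w n ↔ l ∈ archFree w (n - 1) := by
  rw [mem_archFree, mem_archFree, isMotzkin_cons_H_iff, hw.arch_infix_cons_H_iff,
    List.length_cons, Nat.cast_succ, eq_sub_iff_add_eq]

theorem arch_append_mem_archFree_iff (hw : IsMotzkin w) (ha : IsMotzkin a) :
    arch a ++ b ∈ archFree w n ↔
      (a, b) ∈ archFreePairs w (n - 2) \ {w} ×ˢ archFree w (n - 2 - w.length) := by
  have hlength : ((arch a ++ b).length : ℤ) = n ↔ (b.length : ℤ) = n - 2 - a.length := by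
    rw [List.length_append, length_arch]
    omega
  rw [Finset.mem_sdiff, mem_archFreePairs, Finset.mem_product, Finset.mem_singleton]
  simp only [mem_archFree, hlength, ha.arch.append_iff, hw.arch_infix_arch_append_iff ha]
  grind

theorem archFree_eq_image_union_image (hw : IsMotzkin w) (hn : 1 ≤ n) :
    archFree w n = (archFree w (n - 1)).image (Step.H :: ·) ∪
      (archFreePairs w (n - 2) \ {w} ×ˢ archFree w (n - 2 - w.length)).image
        fun p => arch p.1 ++ p.2 := by
  ext l
  rw [Finset.mem_union, Finset.mem_image, Finset.mem_image]
  constructor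
  · intro hl
    obtain ⟨hlength, hMotzkin, -⟩ := mem_archFree.mp hl
    match l with
    | [] => exact absurd (hlength.trans_ge hn) (by simp)
    | Step.D :: l => exact absurd hMotzkin (not_isMotzkin_cons_D l)
    | Step.H :: l => exact .inl ⟨l, (cons_H_mem_archFree_iff hw).mp hl, rfl⟩
    | Step.U :: l =>
      obtain ⟨a, b, ha, hab⟩ := hMotzkin.exists_eq_arch_append
      rw [hab] at hl ⊢
      exact .inr ⟨(a, b), (arch_append_mem_archFree_iff hw ha).mp hl, rfl⟩
  · rintro (⟨l, hl, rfl⟩ | ⟨⟨a, b⟩, hab, rfl⟩)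
    · exact (cons_H_mem_archFree_iff hw).mpr hl
    · have ha := isMotzkin_fst_of_mem_archFreePairs (Finset.mem_sdiff.mp hab).1
      exact (arch_append_mem_archFree_iff hw ha).mpr hab

theorem injOn_arch_append :
    Set.InjOn (fun p : List Step × List Step => arch p.1 ++ p.2) (archFreePairs w n) := by
  rintro ⟨a, b⟩ hp ⟨a', b'⟩ hp' h
  have ha := isMotzkin_fst_of_mem_archFreePairs hp
  have ha' := isMotzkin_fst_of_mem_archFreePairs hp'
  exact Prod.ext_iff.mpr (ha.arch_append_inj ha' h)

theorem card_archFree (hw : IsMotzkin w) (hn : 1 ≤ n) :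
    (archFree w n).card = (archFree w (n - 1)).card +
      (archFreePairs w (n - 2) \ {w} ×ˢ archFree w (n - 2 - w.length)).card := by
  rw [archFree_eq_image_union_image hw hn, Finset.card_union_of_disjoint,
    Finset.card_image_of_injective _ List.cons_injective, Finset.card_image_of_injOn]
  · exact injOn_arch_append.mono (Finset.coe_subset.mpr Finset.sdiff_subset)
  · simp [Finset.disjoint_left, arch]

end Counting

theorem plateauR_free_recursion_general {w : List Step} (hw : IsMotzkin w) {n : ℤ} (hn : 1 ≤ n) :
    ((archFree w n).card : ℤ)
      = (archFree w (n - 1)).card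
        + ∑ k ∈ Finset.Icc 0 (n - 2), ((archFree w k).card : ℤ) * (archFree w (n - k - 2)).card
        - (archFree w (n - w.length - 2)).card := by
  rw [card_archFree hw hn, Nat.cast_add,
    Finset.cast_card_sdiff (singleton_product_archFree_subset hw), card_archFreePairs,
    Finset.card_product, Finset.card_singleton, one_mul, ← add_sub_assoc]
  push_cast
  simp only [sub_right_comm n 2]

theorem plateauCountR_eq_zero_iff {r : ℕ} {l : List Step} :
    plateauCountR r l = 0 ↔ ¬ arch (List.replicate r Step.H) <:+: l := by
  have hlength : (arch (List.replicate r Step.H)).length = r + 2 := by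
    rw [length_arch, List.length_replicate]
  rw [plateauCountR, Finset.card_eq_zero, Finset.filter_eq_empty_iff]
  constructor
  · rintro h ⟨s, t, rfl⟩
    refine h (x := s.length) (by simp [hlength]) ?_
    rw [List.append_assoc, List.drop_left, ← hlength, List.take_left, arch]
  · intro h i _ hi
    refine h ?_
    rw [arch, ← hi]
    exact (List.take_prefix _ _).isInfix.trans (List.drop_suffix _ _).isInfix

theorem cR_zero_right (r : ℕ) (n : ℤ) :
    cR r n 0 = (archFree (List.replicate r Step.H) n).card := by
  rw [cR]
  split_ifs with h
  · refine Nat.subtype_card _ fun l => ?_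
    have hlength : (l.length : ℤ) = n ↔ l.length = n.toNat := by omega
    rw [mem_archFree, hlength, Int.toNat_zero, plateauCountR_eq_zero_iff]
  · refine (Finset.card_eq_zero.mpr (Finset.eq_empty_of_forall_notMem fun l hl => ?_)).symm
    have hlength := (mem_archFree.mp hl).1
    omega

theorem plateauR_free_recursion (r : ℕ) (hr : 1 ≤ r) (n : ℤ) (hn : 1 ≤ n) :
    (cR r n 0 : ℤ)
      = (cR r (n - 1) 0 : ℤ)
        + ∑ k ∈ Finset.Icc (0 : ℤ) (n - 2), (cR r k 0 : ℤ) * (cR r (n - k - 2) 0 : ℤ)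
        - (cR r (n - r - 2) 0 : ℤ) := by
  simpa only [cR_zero_right, List.length_replicate] using
    plateauR_free_recursion_general (isMotzkin_replicate_H r) hn
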